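/- arXiv:2605.21999 — 2 statements merged into one kernel-verified Lean document; each statement's English description precedes it below -/
import Mathlib

section
/- For every filter r ∈ [m] and every iteration t ≥ 0, the signal coordinate w_{r,1}^{(t)} is monotonically non-decreasing, and its one-step increment satisfies (3η(α−ε)³/N)·(w_{r,1}^{(t)})²·Σ_{i∈S_L} ψ(y_i f_{W^{(t)}}(X̃_i^{(t)})) ≤ w_{r,1}^{(t+1)} − w_{r,1}^{(t)} ≤ (3ηα³/N)·(w_{r,1}^{(t)})²·Σ_{i∈S_L} ψ(y_i f_{W^{(t)}}(X̃_i^{(t)})). -/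
open Finset MeasureTheory ProbabilityTheory
open scoped ENNReal NNReal

noncomputable section

namespace AD

/-- Cubic ReLU activation. -/
def phi (z : ℝ) : ℝ := (max 0 z) ^ 3

/-- Negative sigmoid `ψ(z) = 1/(1+e^z)`. -/
def psi (z : ℝ) : ℝ := 1 / (1 + Real.exp z)

/-- Logistic loss `ℓ(z) = log(1+e^{-z})`. -/
def lloss (z : ℝ) : ℝ := Real.log (1 + Real.exp (-z))

/-- Logistic sigmoid `σ(z) = 1/(1+e^{-z})`. -/
def sigm (z : ℝ) : ℝ := 1 / (1 + Real.exp (-z))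

/-- Euclidean inner product on `Fin d → ℝ`. -/
def dot {d : ℕ} (a b : Fin d → ℝ) : ℝ := ∑ k, a k * b k

/-- Squared Euclidean norm. -/
def sqnorm {d : ℕ} (a : Fin d → ℝ) : ℝ := dot a a

/-- First standard basis vector `e₁` (the learnable feature `u`). -/
def e1 (d : ℕ) (hd : 0 < d) : Fin d → ℝ := fun k => if k = (⟨0, hd⟩ : Fin d) then 1 else 0

/-- Last standard basis vector `e_d` (the unlearnable feature `v`). -/
def eLast (d : ℕ) (_hd : 0 < d) : Fin d → ℝ := fun k => if (k : ℕ) = d - 1 then 1 else 0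

/-- The two-layer student network
`f_W(X) = ∑_r ∑_p [φ(⟨w_r,x_p⟩) − φ(−⟨w_r,x_p⟩)]`. -/
def netOut {m P d : ℕ} (w : Fin m → Fin d → ℝ) (X : Fin P → Fin d → ℝ) : ℝ :=
  ∑ r, ∑ p, (phi (dot (w r) (X p)) - phi (-(dot (w r) (X p))))

/-- The concentration event `E` of the paper, i.e. properties (P1)–(P8), stated for
training patches `x`, initialization `w0`, labels `y` and signal-patch indices `sig`. -/
def EventEOn (N m P d : ℕ) (hd : 0 < d) (sigman sigma0 delta : ℝ)
    (y : Fin N → ℝ) (sig : Fin N → Fin P)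
    (x : Fin N → Fin P → Fin d → ℝ) (w0 : Fin m → Fin d → ℝ) : Prop :=
  -- (P1) noise-patch norms
  (∀ i j, j ≠ sig i →
      sigman ^ 2 * d / 2 ≤ sqnorm (x i j) ∧ sqnorm (x i j) ≤ 3 * sigman ^ 2 * d / 2) ∧
  -- (P2) pairwise noise inner products
  (∀ i k j q, j ≠ sig i → q ≠ sig k → ((i, j) : Fin N × Fin P) ≠ (k, q) →
      |dot (x i j) (x k q)| ≤
        2 * sigman ^ 2 * Real.sqrt ((d : ℝ) * Real.log ((16 : ℝ) * N ^ 2 * P ^ 2 / delta))) ∧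
  -- (P3) sup-norm of noise patches
  (∀ i j, j ≠ sig i → ∀ kk : Fin d,
      |x i j kk| ≤ sigman * Real.sqrt (2 * Real.log ((16 : ℝ) * d * N * P / delta))) ∧
  -- (P4) initialization norms
  (∀ r, Real.sqrt (sqnorm (w0 r)) ≤ 2 * sigma0 * Real.sqrt d) ∧
  -- (P5) initialization signal correlation
  (∀ r, |dot (w0 r) (e1 d hd)| ≤ sigma0 * Real.sqrt (2 * Real.log ((16 : ℝ) * m / delta))) ∧
  -- (P6) initialization noise correlations
  (∀ r i j, j ≠ sig i →
      |dot (w0 r) (x i j)| ≤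
        2 * sigma0 * sigman * Real.sqrt ((d : ℝ) * Real.log ((16 : ℝ) * N * m * P / delta))) ∧
  -- (P7) maximal initial signal alignment
  (∃ r, sigma0 / 2 ≤ dot (w0 r) (e1 d hd)) ∧
  -- (P8) maximal initial noise alignment
  (∀ i j, j ≠ sig i → ∃ r, sigma0 * sigman * Real.sqrt d / 4 ≤ y i * dot (w0 r) (x i j))
structure Setting where
  N : ℕ
  m : ℕ
  P : ℕ
  d : ℕ
  T : ℕ
  hN : 0 < N
  hm : 0 < m
  hP : 0 < P
  hd : 0 < d
  alpha : ℝ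
  sigman : ℝ
  sigma0 : ℝ
  eta : ℝ
  eps : ℝ
  delta : ℝ
  halpha : 0 < alpha
  hsigman : 0 < sigman
  hsigma0 : 0 < sigma0
  heta : 0 < eta
  heps : 0 < eps
  hepsalpha : eps < alpha
  hdelta0 : 0 < delta
  hdelta1 : delta < 1
  /-- labels -/
  y : Fin N → ℝ
  hy : ∀ i, y i = 1 ∨ y i = -1
  /-- signal patch index -/
  sig : Fin N → Fin P
  /-- learnable samples -/
  SL : Finset (Fin N)
  /-- unlearnable samples -/
  SU : Finset (Fin N)
  hunion : SL ∪ SU = Finset.univ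
  hdisj : Disjoint SL SU
  /-- training patches -/
  x : Fin N → Fin P → Fin d → ℝ
  hsigL : ∀ i ∈ SL, x i (sig i) = (alpha * y i) • e1 d hd
  hsigU : ∀ i ∈ SU, x i (sig i) = (alpha * y i) • eLast d hd
  hnoiseU : ∀ i j, j ≠ sig i → dot (x i j) (e1 d hd) = 0
  hnoiseV : ∀ i j, j ≠ sig i → dot (x i j) (eLast d hd) = 0
  /-- weight trajectory -/
  w : ℕ → Fin m → Fin d → ℝ
  hwperp : ∀ t r, dot (w t r) (eLast d hd) = 0
  /-- adversarial training examples at each iteration -/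
  xadv : ℕ → Fin N → Fin P → Fin d → ℝ
  hadvnoise : ∀ t i j, j ≠ sig i → xadv t i j = x i j
  hadvspan : ∀ t i, ∃ c : ℝ, xadv t i (sig i) - x i (sig i) = c • x i (sig i)
  hadvlinf : ∀ t i p k, |xadv t i p k - x i p k| ≤ eps
  hadvlearn : ∀ t : ℕ, ∀ i ∈ SL,
    alpha - eps ≤ y i * dot (xadv t i (sig i)) (e1 d hd) ∧
      y i * dot (xadv t i (sig i)) (e1 d hd) ≤ alpha

namespace Setting

variable (S : Setting)

/-- Adversarial margin `y_i f_{W^{(t)}}(X̃_i^{(t)})`. -/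
def marg (t : ℕ) (i : Fin S.N) : ℝ := S.y i * netOut (S.w t) (S.xadv t i)

/-- Signal coordinate `w_{r,1}^{(t)}`. -/
def wsig (t : ℕ) (r : Fin S.m) : ℝ := S.w t r ⟨0, S.hd⟩

/-- Unlearnable fraction `p_un = |S_U|/N`. -/
def pun : ℝ := (S.SU.card : ℝ) / S.N

/-- The adversarial-training gradient-descent dynamics. -/
def ATDyn : Prop :=
  ∀ t r, S.w (t + 1) r = S.w t r +
    (3 * S.eta / S.N) •
      ∑ i : Fin S.N, (psi (S.marg t i) * S.y i) •
        ∑ p : Fin S.P, (dot (S.w t r) (S.xadv t i p)) ^ 2 • S.xadv t i p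

/-- The signed gradient weight of sample `i` at iteration `t` under adversarial
distillation from teacher logits `fT`. -/
def gAD (fT : Fin S.N → ℝ) (t : ℕ) (i : Fin S.N) : ℝ :=
  sigm (S.y i * fT i) * psi (S.marg t i) - sigm (-(S.y i * fT i)) * psi (-(S.marg t i))

/-- The adversarial-distillation gradient-descent dynamics. -/
def ADDyn (fT : Fin S.N → ℝ) : Prop :=
  ∀ t r, S.w (t + 1) r = S.w t r +
    (3 * S.eta / S.N) •
      ∑ i : Fin S.N, (S.gAD fT t i * S.y i) •
        ∑ p : Fin S.P, (dot (S.w t r) (S.xadv t i p)) ^ 2 • S.xadv t i p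

/-- Noise coefficients `ρ_{i,j,r}^{(t)}` (adversarial training). -/
def rho (i : Fin S.N) (j : Fin S.P) (r : Fin S.m) : ℕ → ℝ
  | 0 => 0
  | t + 1 => rho i j r t + (3 * S.eta / S.N) * psi (S.marg t i) * (dot (S.w t r) (S.x i j)) ^ 2

/-- Noise coefficients under adversarial distillation. -/
def rhoAD (fT : Fin S.N → ℝ) (i : Fin S.N) (j : Fin S.P) (r : Fin S.m) : ℕ → ℝ
  | 0 => 0
  | t + 1 => rhoAD fT i j r t + (3 * S.eta / S.N) * S.gAD fT t i * (dot (S.w t r) (S.x i j)) ^ 2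

/-- The event `E` for a setting. -/
def EventE : Prop :=
  EventEOn S.N S.m S.P S.d S.hd S.sigman S.sigma0 S.delta S.y S.sig S.x (S.w 0)

/-- Condition (H): the parameter requirements of Condition 4.1 of the paper
(without the unlearnable-fraction regime item, which is imposed separately). -/
def CondH (C : ℝ) : Prop :=
  1 ≤ C ∧
  -- training horizon
  C * S.N / (S.eta * S.sigma0 * S.sigman ^ 3 * ((S.d : ℝ) * Real.sqrt S.d)) ≤ (S.T : ℝ) ∧
  -- dimension
  C * S.m ^ 2 * S.P ^ 2 * S.N ^ 2 *
      (Real.log ((S.T : ℝ) * S.N * S.m * S.P / S.delta)) ^ 4 ≤ (S.d : ℝ) ∧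
  -- signal strength
  C * S.sigman * Real.sqrt S.d * Real.log ((S.T : ℝ) * S.N * S.m * S.P / S.delta) /
      (((S.N : ℝ) * (1 - S.pun)) ^ ((1 : ℝ) / 3)) ≤ S.alpha ∧
  -- initialization scale
  S.sigma0 ≤
    C⁻¹ *
        min (min (1 / ((S.m : ℝ) ^ ((2 : ℝ) / 3) * (S.P : ℝ) ^ ((2 : ℝ) / 3) *
            S.sigman * Real.sqrt S.d))
          (1 / (S.alpha * (S.m : ℝ) ^ ((2 : ℝ) / 3))))
          (1 / (S.sigman * S.m ^ 2 * Real.sqrt S.P * S.d)) /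
      Real.log ((S.T : ℝ) * S.d * S.N * S.m * S.P / S.delta) ∧
  -- learning rate
  S.eta ≤
    C⁻¹ * min (min (1 / (S.alpha ^ 3 * S.sigma0)) (1 / (S.sigman ^ 2 * S.d))) (1 / S.alpha ^ 2) /
      Real.log ((S.T : ℝ) * S.N * S.m * S.P / S.delta) ∧
  -- adversarial budget
  C * S.sigman * S.m * Real.sqrt S.P * Real.log ((S.T : ℝ) * S.d * S.N * S.P / S.delta) ≤ S.eps ∧
  S.eps < C⁻¹ * min S.alpha (1 / (S.m * S.sigma0 * S.d)) ∧
  -- width and number of patches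
  C * Real.log ((S.N : ℝ) * S.P / S.delta) ≤ (S.m : ℝ) ∧
  (S.m : ℝ) ≤ C * Real.log S.d ^ C ∧
  2 ≤ S.P ∧ (S.P : ℝ) ≤ C

/-- The sparse-unlearnable regime of Condition 4.1. -/
def SparseRegime (C : ℝ) : Prop :=
  C / S.N ≤ S.pun ∧ S.pun ≤ C⁻¹ * Real.log S.d / S.N ∧
  C * S.m * S.P * Real.log ((S.T : ℝ) * S.d * S.N * S.m * S.P / S.delta) ≤ (S.N : ℝ)

/-- The noise-stability bound (NS) on learnable samples at iteration `t`. -/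
def NS (t : ℕ) : Prop :=
  ∀ r : Fin S.m, ∀ i ∈ S.SL, ∀ j, j ≠ S.sig i →
    |dot (S.w t r) (S.x i j)| ≤
      3 * S.sigma0 * S.sigman *
          Real.sqrt ((S.d : ℝ) * Real.log ((16 : ℝ) * S.N * S.m * S.P / S.delta)) +
        21 * S.pun * S.N * S.P * Real.log S.T ^ ((1 : ℝ) / 3) / Real.sqrt S.d *
          Real.sqrt (Real.log ((16 : ℝ) * S.N ^ 2 * S.P ^ 2 / S.delta))

/-- The signal-learning hitting time `T₀`. -/
def T0 (C0 : ℝ) : ℕ :=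
  sInf {t : ℕ | ∃ r, C0 / (S.alpha * (S.m : ℝ) ^ ((1 : ℝ) / 3)) < S.wsig t r}

/-- Maximum of the noise coefficients over unlearnable noise patches. -/
def rhoMaxSU (t : ℕ) : ℝ :=
  sSup {z : ℝ | ∃ r : Fin S.m, ∃ k ∈ S.SU, ∃ q, q ≠ S.sig k ∧ z = S.rho k q r t}

/-- Shifted noise coefficients `ρ̂_{i,j,r}^{(t)}`. -/
def rhoHat (i : Fin S.N) (j : Fin S.P) (r : Fin S.m) (t : ℕ) : ℝ :=
  S.rho i j r t + S.y i * dot (S.w 0 r) (S.x i j) / sqnorm (S.x i j)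

/-- Maximum shifted noise coefficient over unlearnable noise patches. -/
def rhoHatMax (t : ℕ) : ℝ :=
  sSup {z : ℝ | ∃ r : Fin S.m, ∃ k ∈ S.SU, ∃ q, q ≠ S.sig k ∧ z = S.rhoHat k q r t}

/-- The noise-memorization hitting time `T₁`. -/
def T1 (C1 : ℝ) : ℕ :=
  sInf {t : ℕ | C1 / (((S.m : ℝ) * S.P) ^ ((1 : ℝ) / 3) * S.sigman ^ 2 * S.d) < S.rhoHatMax t}

/-- The Good-Teacher horizon `T_max`. -/
def Tmax : ℝ :=
  S.N / (1000 * S.eta * S.m * S.P * S.sigma0 ^ 4 * S.sigman ^ 6 * (S.d : ℝ) ^ 3 *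
    Real.log ((16 : ℝ) * S.N * S.m * S.P / S.delta) ^ 2)

end Setting

/-! In the update of `w_{r,1}` a patch enters through its own first coordinate and through its inner
product with `w_r`. The first factor kills the noise patches, which are orthogonal to `u = e₁`; the
second kills the signal patches of unlearnable samples, which are multiples of `v`. The signal patch
of a learnable sample is `y_i β_i u` with `α − ε ≤ β_i ≤ α`, so it contributes
`ψ_i y_i (w_{r,1} y_i β_i)² y_i β_i = ψ_i w_{r,1}² β_i³`: the label cancels, and the increment
`(3η/N) w_{r,1}² ∑_{i ∈ S_L} ψ_i β_i³` is bounded termwise. -/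

section OrderedSemiring

variable {ι R : Type*} [CommSemiring R] [PartialOrder R] [IsOrderedRing R]
  {s : Finset ι} {f g : ι → R} {c : R}

theorem pow_mul_sum_le_sum_mul_pow (hf : ∀ i ∈ s, 0 ≤ f i) (hc : 0 ≤ c)
    (hg : ∀ i ∈ s, c ≤ g i) (n : ℕ) : c ^ n * ∑ i ∈ s, f i ≤ ∑ i ∈ s, f i * g i ^ n := by
  rw [mul_comm, Finset.sum_mul]
  exact Finset.sum_le_sum fun i hi =>
    mul_le_mul_of_nonneg_left (pow_le_pow_left₀ hc (hg i hi) n) (hf i hi)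

theorem sum_mul_pow_le_pow_mul_sum (hf : ∀ i ∈ s, 0 ≤ f i) (hg₀ : ∀ i ∈ s, 0 ≤ g i)
    (hg : ∀ i ∈ s, g i ≤ c) (n : ℕ) : ∑ i ∈ s, f i * g i ^ n ≤ c ^ n * ∑ i ∈ s, f i := by
  rw [mul_comm, Finset.sum_mul]
  exact Finset.sum_le_sum fun i hi =>
    mul_le_mul_of_nonneg_left (pow_le_pow_left₀ (hg₀ i hi) (hg i hi) n) (hf i hi)

end OrderedSemiring

theorem psi_nonneg (z : ℝ) : 0 ≤ psi z := by
  unfold psi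
  positivity

section CubicGrad

variable {P d : ℕ}

theorem dot_smul (a b : Fin d → ℝ) (c : ℝ) : dot a (c • b) = c * dot a b :=
  dotProduct_smul c a b

theorem dot_e1 (hd : 0 < d) (a : Fin d → ℝ) : dot a (e1 d hd) = a ⟨0, hd⟩ := by
  simp [dot, e1]

theorem smul_e1_apply_zero (hd : 0 < d) (c : ℝ) : (c • e1 d hd) ⟨0, hd⟩ = c := by
  simp [e1]

/-- One third of the gradient in `a` of the response `∑ p, ⟨a, x_p⟩³` of a single filter to the
patches `X`, where the cube arises as `φ(z) − φ(−z) = z³`. The factor `3` is left out because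
`ATDyn` and `ADDyn` absorb it into the step size. -/
def cubicGrad (a : Fin d → ℝ) (X : Fin P → Fin d → ℝ) : Fin d → ℝ :=
  ∑ p, dot a (X p) ^ 2 • X p

theorem cubicGrad_apply_of_forall_ne {X : Fin P → Fin d → ℝ} {s : Fin P} {k : Fin d}
    (hX : ∀ p ≠ s, X p k = 0) (a : Fin d → ℝ) :
    cubicGrad a X k = dot a (X s) ^ 2 * X s k := by
  simp only [cubicGrad, Finset.sum_apply, Pi.smul_apply, smul_eq_mul]
  exact Fintype.sum_eq_single s fun p hp => by rw [hX p hp, mul_zero]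

end CubicGrad

namespace Setting

variable (S : Setting)

/-- The signal strength `β_i = y_i ⟨e₁, x̃_{i,s(X_i)}⟩` that sample `i` retains after the attack at
iteration `t`; it lies in `[α − ε, α]` for learnable samples. -/
def advSignal (t : ℕ) (i : Fin S.N) : ℝ := S.y i * dot (S.xadv t i (S.sig i)) (e1 S.d S.hd)

theorem y_mul_self (i : Fin S.N) : S.y i * S.y i = 1 :=
  mul_self_eq_one_iff.mpr (S.hy i)

theorem advSignal_nonneg {i : Fin S.N} (hi : i ∈ S.SL) (t : ℕ) : 0 ≤ S.advSignal t i :=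
  (sub_pos.mpr S.hepsalpha).le.trans (S.hadvlearn t i hi).1

theorem xadv_apply_zero_of_ne_sig (t : ℕ) (i : Fin S.N) {p : Fin S.P} (hp : p ≠ S.sig i) :
    S.xadv t i p ⟨0, S.hd⟩ = 0 := by
  rw [S.hadvnoise t i p hp, ← dot_e1 S.hd (S.x i p), S.hnoiseU i p hp]

theorem exists_xadv_sig_eq_smul (t : ℕ) (i : Fin S.N) :
    ∃ c : ℝ, S.xadv t i (S.sig i) = c • S.x i (S.sig i) := by
  obtain ⟨c, hc⟩ := S.hadvspan t i
  exact ⟨c + 1, by rw [add_smul, one_smul, ← hc, sub_add_cancel]⟩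

theorem xadv_sig_eq_smul_e1 {i : Fin S.N} (hi : i ∈ S.SL) (t : ℕ) :
    S.xadv t i (S.sig i) = (S.y i * S.advSignal t i) • e1 S.d S.hd := by
  obtain ⟨c, hc⟩ := S.exists_xadv_sig_eq_smul t i
  have hcoord : S.y i * S.advSignal t i = S.xadv t i (S.sig i) ⟨0, S.hd⟩ := by
    rw [advSignal, dot_e1, ← mul_assoc, y_mul_self, one_mul]
  rw [hcoord, hc, S.hsigL i hi, smul_smul, smul_e1_apply_zero]

theorem dot_xadv_sig_of_mem_SU {i : Fin S.N} (hi : i ∈ S.SU) (t : ℕ) {a : Fin S.d → ℝ}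
    (ha : dot a (eLast S.d S.hd) = 0) : dot a (S.xadv t i (S.sig i)) = 0 := by
  obtain ⟨c, hc⟩ := S.exists_xadv_sig_eq_smul t i
  rw [hc, S.hsigU i hi, dot_smul, dot_smul, ha, mul_zero, mul_zero]

theorem cubicGrad_xadv_apply_zero (t : ℕ) (i : Fin S.N) (a : Fin S.d → ℝ) :
    cubicGrad a (S.xadv t i) ⟨0, S.hd⟩ =
      dot a (S.xadv t i (S.sig i)) ^ 2 * S.xadv t i (S.sig i) ⟨0, S.hd⟩ :=
  cubicGrad_apply_of_forall_ne (fun _ hp => S.xadv_apply_zero_of_ne_sig t i hp) a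

theorem y_mul_cubicGrad_xadv_of_mem_SL {i : Fin S.N} (hi : i ∈ S.SL) (t : ℕ)
    (a : Fin S.d → ℝ) :
    S.y i * cubicGrad a (S.xadv t i) ⟨0, S.hd⟩ = a ⟨0, S.hd⟩ ^ 2 * S.advSignal t i ^ 3 := by
  rw [cubicGrad_xadv_apply_zero, xadv_sig_eq_smul_e1 S hi, dot_smul, dot_e1,
    smul_e1_apply_zero]
  calc S.y i * ((S.y i * S.advSignal t i * a ⟨0, S.hd⟩) ^ 2 * (S.y i * S.advSignal t i))
      = (S.y i * S.y i) ^ 2 * (a ⟨0, S.hd⟩ ^ 2 * S.advSignal t i ^ 3) := by ring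
    _ = a ⟨0, S.hd⟩ ^ 2 * S.advSignal t i ^ 3 := by rw [y_mul_self, one_pow, one_mul]

theorem cubicGrad_xadv_of_mem_SU {i : Fin S.N} (hi : i ∈ S.SU) (t : ℕ) {a : Fin S.d → ℝ}
    (ha : dot a (eLast S.d S.hd) = 0) : cubicGrad a (S.xadv t i) ⟨0, S.hd⟩ = 0 := by
  rw [cubicGrad_xadv_apply_zero, S.dot_xadv_sig_of_mem_SU hi t ha, zero_pow two_ne_zero, zero_mul]

theorem sum_smul_cubicGrad_xadv_apply_zero (g : Fin S.N → ℝ) (t : ℕ) {a : Fin S.d → ℝ}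
    (ha : dot a (eLast S.d S.hd) = 0) :
    (∑ i, (g i * S.y i) • cubicGrad a (S.xadv t i)) ⟨0, S.hd⟩ =
      a ⟨0, S.hd⟩ ^ 2 * ∑ i ∈ S.SL, g i * S.advSignal t i ^ 3 := by
  simp only [Finset.sum_apply, Pi.smul_apply, smul_eq_mul, mul_assoc]
  have hSU : ∑ i ∈ S.SU, g i * (S.y i * cubicGrad a (S.xadv t i) ⟨0, S.hd⟩) = 0 :=
    Finset.sum_eq_zero fun i hi => by
      rw [S.cubicGrad_xadv_of_mem_SU hi t ha, mul_zero, mul_zero]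
  rw [← S.hunion, Finset.sum_union S.hdisj, hSU, add_zero, Finset.mul_sum]
  refine Finset.sum_congr rfl fun i hi => ?_
  rw [S.y_mul_cubicGrad_xadv_of_mem_SL hi, mul_left_comm]

variable {S}

theorem ATDyn.wsig_succ_sub (hdyn : S.ATDyn) (t : ℕ) (r : Fin S.m) :
    S.wsig (t + 1) r - S.wsig t r =
      3 * S.eta / S.N * S.wsig t r ^ 2 *
        ∑ i ∈ S.SL, psi (S.marg t i) * S.advSignal t i ^ 3 := by
  have hstep : S.w (t + 1) r = S.w t r + (3 * S.eta / S.N) •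
      ∑ i, (psi (S.marg t i) * S.y i) • cubicGrad (S.w t r) (S.xadv t i) := hdyn t r
  rw [wsig, wsig, hstep, Pi.add_apply, add_sub_cancel_left, Pi.smul_apply, smul_eq_mul,
    S.sum_smul_cubicGrad_xadv_apply_zero _ t (S.hwperp t r), mul_assoc]

end Setting

/-- Signal weight update bounds. Under the AT dynamics, for every
filter `r` and iteration `t`, the signal coordinate `w_{r,1}^{(t)}` is monotonically
non-decreasing, with one-step increment bounded below and above as stated. -/
theorem stmt1 (S : Setting) (hdyn : S.ATDyn) (r : Fin S.m) (t : ℕ) :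
    S.wsig t r ≤ S.wsig (t + 1) r ∧
    3 * S.eta * (S.alpha - S.eps) ^ 3 / S.N * (S.wsig t r) ^ 2 *
        ∑ i ∈ S.SL, psi (S.marg t i) ≤ S.wsig (t + 1) r - S.wsig t r ∧
    S.wsig (t + 1) r - S.wsig t r ≤
      3 * S.eta * S.alpha ^ 3 / S.N * (S.wsig t r) ^ 2 * ∑ i ∈ S.SL, psi (S.marg t i) := by
  have hrate : 0 ≤ 3 * S.eta / S.N * S.wsig t r ^ 2 := by
    have := S.heta
    positivity
  have hψ : ∀ i ∈ S.SL, 0 ≤ psi (S.marg t i) := fun i _ => psi_nonneg _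
  have hε : 0 ≤ S.alpha - S.eps := (sub_pos.mpr S.hepsalpha).le
  have hfactor (c : ℝ) : 3 * S.eta * c ^ 3 / S.N * S.wsig t r ^ 2 *
      ∑ i ∈ S.SL, psi (S.marg t i) =
        3 * S.eta / S.N * S.wsig t r ^ 2 * (c ^ 3 * ∑ i ∈ S.SL, psi (S.marg t i)) := by
    ring
  rw [← sub_nonneg, hdyn.wsig_succ_sub, hfactor, hfactor]
  refine ⟨mul_nonneg hrate <| Finset.sum_nonneg fun i hi =>
      mul_nonneg (hψ i hi) (pow_nonneg (S.advSignal_nonneg hi t) 3),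
    mul_le_mul_of_nonneg_left ?lower hrate, mul_le_mul_of_nonneg_left ?upper hrate⟩
  case lower => exact pow_mul_sum_le_sum_mul_pow hψ hε (fun i hi => (S.hadvlearn t i hi).1) 3
  case upper =>
    exact sum_mul_pow_le_pow_mul_sum hψ (fun i hi => S.advSignal_nonneg hi t)
      (fun i hi => (S.hadvlearn t i hi).2) 3

end AD

end
end

section
/- Define coefficients ρ_{i,j,r}^{(0)} = 0 and ρ_{i,j,r}^{(t+1)} − ρ_{i,j,r}^{(t)} = (3η/N)·ψ(y_i f_{W^{(t)}}(X̃_i^{(t)}))·⟨w_r^{(t)}, x_{i,j}⟩² for every filter r ∈ [m], every noise patch (i,j) with i ∈ [N], j ≠ s(X_i), and every iteration t ≥ 0. Then each ρ_{i,j,r}^{(t)} is monotonically non-decreasing in t, and for every t ≥ 0 the gradient-descent iterates satisfy the exact decomposition ⟨w_r^{(t)}, x_{i,j}⟩ = ⟨w_r^{(0)}, x_{i,j}⟩ + y_i ρ_{i,j,r}^{(t)} ‖x_{i,j}‖₂² + Σ_{(k,q) ≠ (i,j)} y_k ρ_{k,q,r}^{(t)} ⟨x_{k,q}, x_{i,j}⟩,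 where the sum ranges over all noise patches (k,q) with k ∈ [N], q ≠ s(X_k), distinct from (i,j). -/
open Finset MeasureTheory ProbabilityTheory
open scoped ENNReal NNReal

noncomputable section

namespace AD

/-!
A gradient step moves `w_r` by a linear combination of the perturbed patches. Pairing it with a
noise patch removes the signal patches, since their perturbations stay in `span{u, v}`, to which
noise is orthogonal, and leaves the noise patches, which are not perturbed. Hence the increment of
`⟨w_r, x_{i,j}⟩` is the sum over all noise patches of
`y_k (ρ_{k,q,r}^{(t+1)} - ρ_{k,q,r}^{(t)}) ⟨x_{k,q}, x_{i,j}⟩`, and summing over time gives the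
decomposition. Each increment of `ρ` is a product of nonnegative factors, whence the monotonicity.
-/

section PatchDynamics

variable {ι κ R E : Type*} [CommSemiring R] [AddCommMonoid E] [Module R E]
  {sig : ι → κ} {x : ι → κ → E}

theorem map_sum_sum_smul_eq_sum_noise [Fintype ι] [Fintype κ] [DecidableEq κ] {x' : ι → κ → E}
    (f : E →ₗ[R] R) (hsig : ∀ k, f (x' k (sig k)) = 0)
    (hnoise : ∀ k q, q ≠ sig k → x' k q = x k q) (c : ι → R) (b : E → R) :
    f (∑ k, c k • ∑ q, b (x' k q) • x' k q) =
      ∑ kq : ι × κ with kq.2 ≠ sig kq.1, c kq.1 * b (x kq.1 kq.2) * f (x kq.1 kq.2) := by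
  simp only [map_sum, map_smul, smul_eq_mul, Finset.mul_sum, Finset.sum_filter,
    Fintype.sum_prod_type]
  refine Finset.sum_congr rfl fun k _ => Finset.sum_congr rfl fun q _ => ?_
  split_ifs with hq
  · rw [hnoise k q hq, mul_assoc]
  · rw [not_not.mp hq, hsig, mul_zero, mul_zero]

/- `w` is the trajectory of a single filter. In adversarial training `η` is `3η/N`, `g t k` is
`ψ(y_k f(X̃_k))` and `a z` is `z ^ 2`, from the derivatives of the loss and of the activation. -/
variable [Fintype ι] [Fintype κ] {η : R} {g : ℕ → ι → R} {a : R → R} {w : ℕ → E}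
  {ρ : ι → κ → ℕ → R} {B : LinearMap.BilinForm R E} {y : ι → R} {xadv : ℕ → ι → κ → E}

theorem bilin_eq_add_sum_noise [DecidableEq κ]
    (hnoise : ∀ t k q, q ≠ sig k → xadv t k q = x k q)
    (hw : ∀ t, w (t + 1) = w t +
      η • ∑ k, (g t k * y k) • ∑ q, a (B (w t) (xadv t k q)) • xadv t k q)
    (hρ_zero : ∀ k q, ρ k q 0 = 0)
    (hρ_succ : ∀ k q t, ρ k q (t + 1) = ρ k q t + η * g t k * a (B (w t) (x k q)))
    {z : E} (hsig : ∀ t k, B (xadv t k (sig k)) z = 0) (t : ℕ) :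
    B (w t) z = B (w 0) z +
      ∑ kq : ι × κ with kq.2 ≠ sig kq.1, y kq.1 * ρ kq.1 kq.2 t * B (x kq.1 kq.2) z := by
  induction t with
  | zero => simp only [hρ_zero, mul_zero, zero_mul, Finset.sum_const_zero, add_zero]
  | succ t ih =>
    have hstep : B (w (t + 1)) z = B (w t) z + η * ∑ kq : ι × κ with kq.2 ≠ sig kq.1,
        g t kq.1 * y kq.1 * a (B (w t) (x kq.1 kq.2)) * B (x kq.1 kq.2) z := by
      rw [hw, map_add, map_smul, LinearMap.add_apply, LinearMap.smul_apply, smul_eq_mul]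
      exact congrArg (B (w t) z + η * ·) <|
        map_sum_sum_smul_eq_sum_noise (B.flip z) (hsig t) (hnoise t) (fun k => g t k * y k)
          fun v => a (B (w t) v)
    rw [hstep, ih, add_assoc, Finset.mul_sum, ← Finset.sum_add_distrib]
    congr! 2 with kq
    rw [hρ_succ]
    ring

theorem stmt2_general [DecidableEq ι] [DecidableEq κ] [PartialOrder R] [IsOrderedRing R]
    (hη : 0 ≤ η) (hg : ∀ t k, 0 ≤ g t k) (ha : ∀ z, 0 ≤ a z)
    (hnoise : ∀ t k q, q ≠ sig k → xadv t k q = x k q)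
    (hw : ∀ t, w (t + 1) = w t +
      η • ∑ k, (g t k * y k) • ∑ q, a (B (w t) (xadv t k q)) • xadv t k q)
    (hρ_zero : ∀ k q, ρ k q 0 = 0)
    (hρ_succ : ∀ k q t, ρ k q (t + 1) = ρ k q t + η * g t k * a (B (w t) (x k q)))
    {i : ι} {j : κ} (hj : j ≠ sig i) (hsig : ∀ t k, B (xadv t k (sig k)) (x i j) = 0) :
    Monotone (ρ i j) ∧ ∀ t, B (w t) (x i j) =
      B (w 0) (x i j) + y i * ρ i j t * B (x i j) (x i j) +
        ∑ kq : ι × κ with kq.2 ≠ sig kq.1 ∧ kq ≠ (i, j),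
          y kq.1 * ρ kq.1 kq.2 t * B (x kq.1 kq.2) (x i j) := by
  have hincr (t : ℕ) : 0 ≤ η * g t i * a (B (w t) (x i j)) :=
    mul_nonneg (mul_nonneg hη (hg t i)) (ha _)
  refine ⟨monotone_nat_of_le_succ fun t => hρ_succ i j t ▸ le_add_of_nonneg_right (hincr t),
    fun t => ?_⟩
  have hij : (i, j) ∈ Finset.univ.filter fun kq : ι × κ => kq.2 ≠ sig kq.1 :=
    Finset.mem_filter.mpr ⟨Finset.mem_univ _, hj⟩
  rw [bilin_eq_add_sum_noise hnoise hw hρ_zero hρ_succ hsig t, ← Finset.add_sum_erase _ _ hij,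
    ← Finset.filter_ne', Finset.filter_filter, add_assoc]

end PatchDynamics

theorem dot_comm {d : ℕ} (a b : Fin d → ℝ) : dot a b = dot b a := dotProduct_comm a b

theorem dot_smul_left {d : ℕ} (c : ℝ) (a b : Fin d → ℝ) : dot (c • a) b = c * dot a b :=
  smul_dotProduct c a b

namespace Setting

variable (S : Setting)

theorem dot_signal_noise (k i : Fin S.N) {j : Fin S.P} (hj : j ≠ S.sig i) :
    dot (S.x k (S.sig k)) (S.x i j) = 0 := by
  have hk : k ∈ S.SL ∪ S.SU := S.hunion ▸ Finset.mem_univ k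
  rcases Finset.mem_union.mp hk with hL | hU
  · rw [S.hsigL k hL, dot_smul_left, dot_comm, S.hnoiseU i j hj, mul_zero]
  · rw [S.hsigU k hU, dot_smul_left, dot_comm, S.hnoiseV i j hj, mul_zero]

theorem dot_advSignal_noise (t : ℕ) (k i : Fin S.N) {j : Fin S.P} (hj : j ≠ S.sig i) :
    dot (S.xadv t k (S.sig k)) (S.x i j) = 0 := by
  obtain ⟨c, hc⟩ := S.hadvspan t k
  have hadv : S.xadv t k (S.sig k) = (c + 1) • S.x k (S.sig k) := by
    rw [add_smul, one_smul, ← hc, sub_add_cancel]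
  rw [hadv, dot_smul_left, S.dot_signal_noise k i hj, mul_zero]

theorem three_mul_eta_div_nonneg : 0 ≤ 3 * S.eta / S.N :=
  div_nonneg (mul_nonneg zero_le_three S.heta.le) S.N.cast_nonneg

end Setting

/-- Noise coefficient update rule. The coefficients `ρ_{i,j,r}^{(t)}`
are monotonically non-decreasing, and the iterates satisfy the exact decomposition of
the noise responses. -/
theorem stmt2 (S : Setting) (hdyn : S.ATDyn) (i : Fin S.N) (j : Fin S.P) (hj : j ≠ S.sig i)
    (r : Fin S.m) (t : ℕ) :
    S.rho i j r t ≤ S.rho i j r (t + 1) ∧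
    dot (S.w t r) (S.x i j) =
      dot (S.w 0 r) (S.x i j) + S.y i * S.rho i j r t * sqnorm (S.x i j) +
        ∑ kq ∈ Finset.univ.filter
            (fun kq : Fin S.N × Fin S.P => kq.2 ≠ S.sig kq.1 ∧ kq ≠ (i, j)),
          S.y kq.1 * S.rho kq.1 kq.2 r t * dot (S.x kq.1 kq.2) (S.x i j) := by
  obtain ⟨hmono, hdecomp⟩ := stmt2_general (a := (· ^ 2)) (B := dotProductBilin ℝ ℝ)
    (ρ := fun k q => S.rho k q r) S.three_mul_eta_div_nonneg (fun t k => psi_nonneg (S.marg t k))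
    sq_nonneg S.hadvnoise (hdyn · r) (fun _ _ => rfl) (fun _ _ _ => rfl) hj
    (S.dot_advSignal_noise · · i hj)
  exact ⟨hmono t.le_succ, hdecomp t⟩

end AD

end
end
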